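/- Let q ≥ 3, a_0 ∈ ℤ, and let (a_i)_{i≥1} be an infinite q-regular sequence with convergents p_n, q_n. Then: q_n ≠ 0 for all n ≥ 0; |q_n| ≥ |q_{n−1}| for all n ≥ 1, and for q = 3 even |q_n| > |q_{n−1}| for all n ≥ 1; |q_n| → ∞ as n → ∞; and the sequence (p_n/q_n) is a Cauchy sequence. -/

import Mathlib

open Filter Topology

/-- `λ_q = 2 cos (π/q)`. -/
noncomputable def lamq (q : ℕ) : ℝ := 2 * Real.cos (Real.pi / q)

/-- `h_q = (q-2)/2` for even `q` and `(q-3)/2` for odd `q`. -/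
def hQ (q : ℕ) : ℕ := if Even q then (q - 2) / 2 else (q - 3) / 2

/-- Forbidden blocks for the nearest `λ_q`-multiple continued fractions.
For `ε ∈ {1,-1}`: the block `(ε)^{h_q+1}`; for even `q` the blocks `((ε)^{h_q}, ε·m)`, `m ≥ 1`;
for odd `q` (including `q = 3`, where `h_q = 0`) the blocks `((ε)^{h_q}, ε·2, (ε)^{h_q}, ε·m)`,
`m ≥ 1`. -/
def IsForbidden (q : ℕ) (L : List ℤ) : Prop :=
  ∃ ε : ℤ, (ε = 1 ∨ ε = -1) ∧
    (L = List.replicate (hQ q + 1) ε ∨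
      (if Even q then
        ∃ m : ℤ, 1 ≤ m ∧ L = List.replicate (hQ q) ε ++ [ε * m]
      else
        ∃ m : ℤ, 1 ≤ m ∧
          L = List.replicate (hQ q) ε ++ ε * 2 :: (List.replicate (hQ q) ε ++ [ε * m])))

/-- An infinite sequence is `q`-regular if no finite subblock is forbidden. -/
def RegularSeq (q : ℕ) (a : ℕ → ℤ) : Prop :=
  ∀ (l len : ℕ), ¬ IsForbidden q (List.ofFn fun j : Fin len => a (l + (j : ℕ)))

/-- An infinite sequence is dual `q`-regular if no reversed finite subblock is forbidden. -/
def DualRegularSeq (q : ℕ) (a : ℕ → ℤ) : Prop :=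
  ∀ (l len : ℕ), ¬ IsForbidden q (List.ofFn fun j : Fin len => a (l + (j : ℕ))).reverse

/-- A finite sequence is `q`-regular if no contiguous subblock is forbidden. -/
def RegularList (q : ℕ) (L : List ℤ) : Prop :=
  ∀ B : List ℤ, B <:+: L → ¬ IsForbidden q B

/-- Numerators of the convergents: `p₀ = a₀λ`, `p₁ = a₁λ·p₀ - 1`,
`pₙ = aₙλ·pₙ₋₁ - pₙ₋₂` (so that `p₋₁ = 1`, `p₋₂ = 0`).  Here `A n` is the digit `aₙ`. -/
noncomputable def cfP (lam : ℝ) (A : ℕ → ℤ) : ℕ → ℝ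
  | 0 => (A 0 : ℝ) * lam
  | 1 => (A 1 : ℝ) * lam * ((A 0 : ℝ) * lam) - 1
  | (n + 2) => (A (n + 2) : ℝ) * lam * cfP lam A (n + 1) - cfP lam A n

/-- Denominators of the convergents: `q₀ = 1`, `q₁ = a₁λ`,
`qₙ = aₙλ·qₙ₋₁ - qₙ₋₂` (so that `q₋₁ = 0`, `q₋₂ = -1`). -/
noncomputable def cfQ (lam : ℝ) (A : ℕ → ℤ) : ℕ → ℝ
  | 0 => 1
  | 1 => (A 1 : ℝ) * lam
  | (n + 2) => (A (n + 2) : ℝ) * lam * cfQ lam A (n + 1) - cfQ lam A n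

/-- The λ-continued fraction with digit sequence `A` converges to `x`. -/
def CFConvergesTo (lam : ℝ) (A : ℕ → ℤ) (x : ℝ) : Prop :=
  (∀ n, cfQ lam A n ≠ 0) ∧
    Filter.Tendsto (fun n => cfP lam A n / cfQ lam A n) Filter.atTop (nhds x)

/-- The value `p_L/q_L` of the finite continued fraction `[a₀; a₁, …, a_L]`. -/
noncomputable def cfValList (lam : ℝ) (a0 : ℤ) (L : List ℤ) : ℝ :=
  cfP lam (fun i => (a0 :: L).getD i 0) L.length /
    cfQ lam (fun i => (a0 :: L).getD i 0) L.length

/-- The last denominator `q_L` of the finite continued fraction `[a₀; a₁, …, a_L]`. -/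
noncomputable def cfDenList (lam : ℝ) (a0 : ℤ) (L : List ℤ) : ℝ :=
  cfQ lam (fun i => (a0 :: L).getD i 0) L.length

/-- The modified floor: `⌊t⌋* = ⌈t⌉ - 1` for `t > 0` and `⌊t⌋* = ⌊t⌋` for `t ≤ 0`. -/
noncomputable def floorstar (t : ℝ) : ℤ := if 0 < t then ⌈t⌉ - 1 else ⌊t⌋

/-- The nearest `λ`-multiple: `⟨y⟩ = ⌊y/λ + 1/2⌋*`. -/
noncomputable def nearestLam (lam : ℝ) (x : ℝ) : ℤ := floorstar (x / lam + 1 / 2)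

/-- The interval map `f_q` on `I_q = [-λ/2, λ/2]`. -/
noncomputable def fq (lam : ℝ) (x : ℝ) : ℝ :=
  if x = 0 then 0 else -1 / x - (nearestLam lam (-1 / x) : ℝ) * lam

/-- `R_q`: equal to `1` for even `q`, and the positive root of `R² + (2-λ_q)R = 1` for odd `q`. -/
noncomputable def Rq (q : ℕ) : ℝ :=
  if Even q then 1 else (lamq q - 2 + Real.sqrt ((2 - lamq q) ^ 2 + 4)) / 2

/-- `r_q = R_q - λ_q`. -/
noncomputable def rq (q : ℕ) : ℝ := Rq q - lamq q

/-- The map `⟨·⟩*` used by the dual algorithm. -/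
noncomputable def nearestDual (lam R y : ℝ) : ℤ :=
  if 0 ≤ y then floorstar (y / lam + 1 - R / lam) else floorstar (y / lam + R / lam)

/-- The dual interval map `f_q^*` on `I_{R_q} = [-R_q, R_q]`. -/
noncomputable def fqstar (lam R : ℝ) (x : ℝ) : ℝ :=
  if x = 0 then 0 else -1 / x - (nearestDual lam R (-1 / x) : ℝ) * lam

/-- The matrix `S = [[0,-1],[1,0]]` as an element of `SL(2,ℝ)`. -/
noncomputable def matS : Matrix.SpecialLinearGroup (Fin 2) ℝ :=
  ⟨!![0, -1; 1, 0], by norm_num [Matrix.det_fin_two_of]⟩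

/-- The matrix `T = [[1,λ],[0,1]]` as an element of `SL(2,ℝ)`. -/
noncomputable def matT (lam : ℝ) : Matrix.SpecialLinearGroup (Fin 2) ℝ :=
  ⟨!![1, lam; 0, 1], by norm_num [Matrix.det_fin_two_of]⟩

/-- The Hecke triangle group `G_q`, the subgroup of `SL(2,ℝ)` generated by `S` and `T_q`. -/
noncomputable def Hecke (q : ℕ) : Subgroup (Matrix.SpecialLinearGroup (Fin 2) ℝ) :=
  Subgroup.closure {matS, matT (lamq q)}

/-- The Möbius action of `g` on `x ∈ ℝ`. -/
noncomputable def moeb (g : Matrix.SpecialLinearGroup (Fin 2) ℝ) (x : ℝ) : ℝ :=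
  (g.val 0 0 * x + g.val 0 1) / (g.val 1 0 * x + g.val 1 1)

/-- `x` and `y` are `G_q`-equivalent. -/
def GqEquiv (q : ℕ) (x y : ℝ) : Prop :=
  ∃ g ∈ Hecke q, (g.val 1 0 * x + g.val 1 1 ≠ 0) ∧ moeb g x = y

/-- Two sequences have a common tail. -/
def CommonTail (a b : ℕ → ℤ) : Prop := ∃ m n : ℕ, ∀ k : ℕ, a (m + k) = b (n + k)

/-- The period block of `ρ_q`: `(3)` for `q = 3`, `((1)^{h_q-1}, 2)` for even `q`
and `((1)^{h_q}, 2, (1)^{h_q-1}, 2)` for odd `q ≥ 5`. -/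
def rhoBlock (q : ℕ) : List ℤ :=
  if q = 3 then [3]
  else if Even q then List.replicate (hQ q - 1) 1 ++ [2]
  else List.replicate (hQ q) 1 ++ 2 :: (List.replicate (hQ q - 1) 1 ++ [2])

/-- The periodic sequence `ρ_q`. -/
def rho (q : ℕ) (i : ℕ) : ℤ := (rhoBlock q).getD (i % (rhoBlock q).length) 0

/-- `x` has the infinite regular `λ_q`-CF with digit sequence `A` (with `A 0 = a₀`). -/
def HasRegCF (q : ℕ) (x : ℝ) (A : ℕ → ℤ) : Prop :=
  (∀ i, A (i + 1) ≠ 0) ∧ RegularSeq q (fun i => A (i + 1)) ∧ CFConvergesTo (lamq q) A x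

/-- `x` has the infinite dual regular `λ_q`-CF with digit sequence `A` (with `A 0 = a₀`). -/
def HasDualRegCF (q : ℕ) (x : ℝ) (A : ℕ → ℤ) : Prop :=
  (∀ i, A (i + 1) ≠ 0) ∧ DualRegularSeq q (fun i => A (i + 1)) ∧ CFConvergesTo (lamq q) A x

/-- The digits of `x` produced by the algorithm for `f_q`: `a_{i+1} = ⟨-1 / f_q^i(x)⟩`. -/
noncomputable def digitSeq (lam : ℝ) (x : ℝ) : ℕ → ℤ :=
  fun i => nearestLam lam (-1 / (fq lam)^[i] x)

/-- The digits of `x` produced by the algorithm for `f_q^*`: `b_{i+1} = ⟨-1 / (f_q^*)^i(x)⟩*`. -/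
noncomputable def digitSeqStar (lam R : ℝ) (x : ℝ) : ℕ → ℤ :=
  fun i => nearestDual lam R (-1 / (fqstar lam R)^[i] x)

/-! The ratios `t_n = q_{n-1}/q_n` satisfy `t_{n+1} = 1/(a_{n+1} λ - t_n)`, and the key estimate
is `|t_n| ≤ 1`. A large `t_n` can only arise by reading a prefix of the critical word of positive
digits `(1)^{h_q}`, resp. `((1)^{h_q}, 2, (1)^{h_q})`, starting from a ratio at most `1/(λ+1)`, and
regularity says that no positive digit follows this word. Writing ratios as
`sin (xπ/q) / sin ((x+1)π/q)`, the digit `1` becomes the translation `x ↦ x + 1`, and the whole word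
is read before the ratio exceeds `1`. If `λ > 1`, then `|t_n| ≤ 1` for all `n` already forces one
of any two consecutive ratios to be at most `max (λ - 1) (1/λ) < 1`; for `q = 3`, where `λ = 1`, the
same bookkeeping gives `|t_n| ≤ 2/3`. So `|q_n|` grows geometrically, and since consecutive
convergents differ by `1/(q_n q_{n+1})`, they form a Cauchy sequence. -/

/-- The ratios `t_n = q_{n-1}/q_n` of consecutive denominators of the `λ`-continued fraction
`[a₀; a₁, a₂, …]`, as a function of the tail of digits: here `a n` is the digit `a_{n+1}`, and
`t₀ = 0` because `q₋₁ = 0`. -/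
noncomputable def denRatio (lam : ℝ) (a : ℕ → ℤ) : ℕ → ℝ
  | 0 => 0
  | n + 1 => (a n * lam - denRatio lam a n)⁻¹

theorem denRatio_neg (lam : ℝ) (a : ℕ → ℤ) (n : ℕ) :
    denRatio lam (-a) n = -denRatio lam a n := by
  induction n with
  | zero => simp only [denRatio, neg_zero]
  | succ n ih =>
    rw [denRatio, denRatio, ih, ← inv_neg, Pi.neg_apply, Int.cast_neg]
    congr 1
    ring

section Words

/-- The digit sequence `a` is admissible for the word `w` if a positive digit that follows a prefix
of `w` is at least the next letter of `w`; in particular no positive digit follows `w` itself. -/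
def Admissible (w : List ℤ) (a : ℕ → ℤ) : Prop :=
  ∀ n j : ℕ, w.take j <:+ (List.range n).map a → 0 < a n → ∃ h : j < w.length, w[j] ≤ a n

/-- Upper bounds `Z j ≤ 1` for the ratio `q_{n-1}/q_n` right after the first `j` letters of `w` have
been read. The lower bound on `w[j] * lam - Z j` is what makes a digit larger than `w[j]` lead back
to the bound `Z 0` for the empty prefix. -/
structure IsPrefixBound (lam : ℝ) (w : List ℤ) (Z : ℕ → ℝ) : Prop where
  inv_add_one_le_zero : (lam + 1)⁻¹ ≤ Z 0
  inv_le_succ : ∀ (j : ℕ) (h : j < w.length), (w[j] * lam - Z j)⁻¹ ≤ Z (j + 1)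
  one_le_sub : ∀ (j : ℕ) (h : j < w.length), 1 ≤ w[j] * lam - Z j
  le_one : ∀ j ≤ w.length, Z j ≤ 1

variable {lam : ℝ} {w : List ℤ} {Z : ℕ → ℝ} {a : ℕ → ℤ}

theorem Admissible.exists_denRatio_succ_le (ha : Admissible w a) (hZ : IsPrefixBound lam w Z)
    (hlam : 1 ≤ lam) {n : ℕ} (hn : a n ≠ 0) (hlow : -1 ≤ denRatio lam a n)
    (hup : ∃ j ≤ w.length, w.take j <:+ (List.range n).map a ∧ denRatio lam a n ≤ Z j) :
    ∃ j ≤ w.length, w.take j <:+ (List.range (n + 1)).map a ∧ denRatio lam a (n + 1) ≤ Z j := by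
  have hZ0 := hZ.inv_add_one_le_zero
  obtain ⟨j, -, hsuf, hj⟩ := hup
  rw [denRatio]
  rcases lt_or_gt_of_ne hn with hneg | hpos
  · have hdigit : (a n : ℝ) ≤ -1 := by exact_mod_cast Int.le_sub_one_of_lt hneg
    refine ⟨0, Nat.zero_le _, by simp, ?_⟩
    calc (a n * lam - denRatio lam a n)⁻¹ ≤ 0 := inv_nonpos.mpr (by nlinarith)
      _ ≤ (lam + 1)⁻¹ := by positivity
      _ ≤ Z 0 := hZ0
  · obtain ⟨hjw, hle⟩ := ha n j hsuf hpos
    have hgap := hZ.one_le_sub j hjw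
    rcases hle.eq_or_lt with heq | hlt
    · refine ⟨j + 1, hjw, ?_, ?_⟩
      · rw [← List.take_append_getElem hjw, List.range_succ, List.map_append, heq]
        exact List.suffix_append_self_iff.mpr hsuf
      · refine le_trans ?_ (hZ.inv_le_succ j hjw)
        rw [heq] at hgap ⊢
        gcongr
    · have hdigit : (w[j] : ℝ) + 1 ≤ a n := by exact_mod_cast hlt
      refine ⟨0, Nat.zero_le _, by simp, le_trans ?_ hZ0⟩
      gcongr
      nlinarith

theorem Admissible.exists_denRatio_le (ha : Admissible w a) (ha' : Admissible w (-a))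
    (hZ : IsPrefixBound lam w Z) (hlam : 1 ≤ lam) (hnz : ∀ n, a n ≠ 0) (n : ℕ) :
    (∃ j ≤ w.length, w.take j <:+ (List.range n).map a ∧ denRatio lam a n ≤ Z j) ∧
      ∃ j ≤ w.length, w.take j <:+ (List.range n).map (-a) ∧ denRatio lam (-a) n ≤ Z j := by
  induction n with
  | zero =>
    have hZ0 : 0 ≤ Z 0 := le_trans (by positivity) hZ.inv_add_one_le_zero
    exact ⟨⟨0, Nat.zero_le _, by simp, hZ0⟩, 0, Nat.zero_le _, by simp, hZ0⟩
  | succ n ih =>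
    obtain ⟨hpos, hneg⟩ := ih
    have hup : denRatio lam a n ≤ 1 := by
      obtain ⟨j, hj, -, hle⟩ := hpos
      exact hle.trans (hZ.le_one j hj)
    have hlow : -denRatio lam a n ≤ 1 := by
      obtain ⟨j, hj, -, hle⟩ := hneg
      exact (denRatio_neg lam a n).ge.trans (hle.trans (hZ.le_one j hj))
    refine ⟨ha.exists_denRatio_succ_le hZ hlam (hnz n) (neg_le.mp hlow) hpos,
      ha'.exists_denRatio_succ_le hZ hlam (neg_ne_zero.mpr (hnz n)) ?_ hneg⟩
    rwa [denRatio_neg, neg_le_neg_iff]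

theorem Admissible.exists_abs_denRatio_le (ha : Admissible w a) (ha' : Admissible w (-a))
    (hZ : IsPrefixBound lam w Z) (hlam : 1 ≤ lam) (hnz : ∀ n, a n ≠ 0) (n : ℕ) :
    ∃ j ≤ w.length, |denRatio lam a n| ≤ Z j := by
  obtain ⟨⟨i, hi, -, hiZ⟩, ⟨j, hj, -, hjZ⟩⟩ := ha.exists_denRatio_le ha' hZ hlam hnz n
  rw [denRatio_neg] at hjZ
  rcases abs_choice (denRatio lam a n) with h | h <;> rw [h]
  exacts [⟨i, hi, hiZ⟩, ⟨j, hj, hjZ⟩]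

end Words

section Regularity

variable {q : ℕ} {a : ℕ → ℤ}

theorem IsForbidden.map_neg {L : List ℤ} (hL : IsForbidden q L) :
    IsForbidden q (L.map Neg.neg) := by
  obtain ⟨ε, hε, h⟩ := hL
  refine ⟨-ε, by omega, ?_⟩
  split_ifs at h ⊢
  all_goals
    rcases h with rfl | ⟨m, hm, rfl⟩
    · exact Or.inl List.map_replicate
    · exact Or.inr ⟨m, hm, by simp⟩

theorem RegularSeq.neg (ha : RegularSeq q a) : RegularSeq q (-a) := by
  intro l len hL
  refine ha l len ?_
  simpa [List.map_ofFn, Function.comp_def] using hL.map_neg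

theorem RegularSeq.not_isForbidden_of_suffix (ha : RegularSeq q a) {n : ℕ} {u : List ℤ}
    (hu : u <:+ (List.range n).map a) : ¬ IsForbidden q u := by
  obtain ⟨v, hv⟩ := hu
  have hblock : u = List.ofFn fun j : Fin u.length => a (v.length + j) := by
    refine List.ext_getElem (by simp) fun i hi _ => ?_
    have hget : (v ++ u)[v.length + i]'(by simpa) = u[i] := by simp
    rw [List.getElem_ofFn, ← hget]
    simp [hv]
  rw [hblock]
  exact ha v.length u.length

/-- The word `(1)^{h_q}` for even `q` and `((1)^{h_q}, 2, (1)^{h_q})` for odd `q`: in a `q`-regular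
sequence no positive digit may follow it. -/
def criticalWord (q : ℕ) : List ℤ :=
  if Even q then List.replicate (hQ q) 1
  else List.replicate (hQ q) 1 ++ 2 :: List.replicate (hQ q) 1

theorem isForbidden_replicate_one (q : ℕ) : IsForbidden q (List.replicate (hQ q) 1 ++ [1]) :=
  ⟨1, Or.inl rfl, Or.inl List.replicate_succ'.symm⟩

theorem isForbidden_criticalWord_append {m : ℤ} (hm : 1 ≤ m) :
    IsForbidden q (criticalWord q ++ [m]) := by
  refine ⟨1, Or.inl rfl, Or.inr ?_⟩
  unfold criticalWord
  split_ifs <;> exact ⟨m, hm, by simp⟩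

theorem take_hQ_criticalWord (q : ℕ) :
    (criticalWord q).take (hQ q) = List.replicate (hQ q) 1 := by
  unfold criticalWord
  split_ifs <;> simp

theorem criticalWord_getElem {j : ℕ} (hj : j < (criticalWord q).length) :
    (criticalWord q)[j] = if j = hQ q then 2 else 1 := by
  unfold criticalWord at hj ⊢
  split_ifs at hj ⊢ <;> grind

theorem RegularSeq.admissible (ha : RegularSeq q a) : Admissible (criticalWord q) a := by
  intro n j hsuf hpos
  have hext : (criticalWord q).take j ++ [a n] <:+ (List.range (n + 1)).map a := by
    rw [List.range_succ, List.map_append]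
    exact List.suffix_append_self_iff.mpr hsuf
  have hallowed := ha.not_isForbidden_of_suffix hext
  have hj : j < (criticalWord q).length := by
    by_contra! hj
    rw [List.take_of_length_le hj] at hallowed
    exact hallowed (isForbidden_criticalWord_append hpos)
  refine ⟨hj, ?_⟩
  rw [criticalWord_getElem]
  split_ifs with hjh
  · have hne : a n ≠ 1 := by
      intro hone
      rw [hjh, take_hQ_criticalWord, hone] at hallowed
      exact hallowed (isForbidden_replicate_one q)
    omega
  · exact hpos

end Regularity

section Trigonometry

variable {q : ℕ} {x : ℝ}

theorem lamq_three : lamq 3 = 1 := by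
  rw [lamq, Nat.cast_ofNat, Real.cos_pi_div_three]
  norm_num

theorem one_lt_lamq (hq : 3 < q) : 1 < lamq q := by
  have hq' : (3 : ℝ) < q := by exact_mod_cast hq
  have hcos : Real.cos (Real.pi / 3) < Real.cos (Real.pi / q) :=
    Real.cos_lt_cos_of_nonneg_of_le_pi (by positivity) (by linarith [Real.pi_pos])
      (div_lt_div_of_pos_left Real.pi_pos (by norm_num) hq')
  rw [Real.cos_pi_div_three] at hcos
  rw [lamq]
  linarith

theorem one_le_lamq (hq : 3 ≤ q) : 1 ≤ lamq q := by
  rcases hq.eq_or_lt with rfl | h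
  exacts [lamq_three.ge, (one_lt_lamq h).le]

theorem lamq_lt_two (hq : 1 ≤ q) : lamq q < 2 := by
  have hq' : (1 : ℝ) ≤ q := by exact_mod_cast hq
  have hcos : Real.cos (Real.pi / q) < Real.cos 0 :=
    Real.cos_lt_cos_of_nonneg_of_le_pi le_rfl (div_le_self Real.pi_pos.le hq') (by positivity)
  rw [Real.cos_zero] at hcos
  rw [lamq]
  linarith

theorem sin_mul_pi_div_pos (h0 : 0 < x) (h : x < q) : 0 < Real.sin (x * (Real.pi / q)) := by
  have hq : (0 : ℝ) < q := h0.trans h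
  refine Real.sin_pos_of_pos_of_lt_pi (by positivity) ?_
  rw [mul_div_left_comm]
  exact mul_lt_of_lt_one_right Real.pi_pos ((div_lt_one hq).mpr h)

theorem sin_mul_pi_div_le (h0 : 0 ≤ x) (h : 2 * x + 1 ≤ q) :
    Real.sin (x * (Real.pi / q)) ≤ Real.sin ((x + 1) * (Real.pi / q)) := by
  have hq : (0 : ℝ) < q := by linarith
  have hθ : 0 < Real.pi / q := by positivity
  have hpi : (2 * x + 1) * (Real.pi / q) ≤ Real.pi := by
    rw [mul_div_left_comm]
    exact mul_le_of_le_one_right Real.pi_pos.le ((div_le_one hq).mpr h)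
  have hxθ : 0 ≤ x * (Real.pi / q) := by positivity
  rw [← sub_nonneg, Real.sin_sub_sin]
  refine mul_nonneg (mul_nonneg zero_le_two ?_) ?_
  · exact Real.sin_nonneg_of_nonneg_of_le_pi (by linarith) (by linarith)
  · exact Real.cos_nonneg_of_neg_pi_div_two_le_of_le (by linarith) (by linarith)

/-- The ratio `sin (xπ/q) / sin ((x+1)π/q)`. In the parameter `x`, reading the digit `1` of a
`λ_q`-continued fraction is the translation `x ↦ x + 1` (see `lamq_sub_sinRatio`). -/
noncomputable def sinRatio (q : ℕ) (x : ℝ) : ℝ :=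
  Real.sin (x * (Real.pi / q)) / Real.sin ((x + 1) * (Real.pi / q))

theorem sinRatio_le_one (h0 : 0 < x) (h : 2 * x + 1 ≤ q) : sinRatio q x ≤ 1 :=
  div_le_one_of_le₀ (sin_mul_pi_div_le h0.le h)
    (sin_mul_pi_div_pos (by linarith) (by linarith)).le

theorem lamq_sub_sinRatio (h0 : 0 < x + 1) (h : x + 1 < q) :
    lamq q - sinRatio q x = (sinRatio q (x + 1))⁻¹ := by
  have hsum : Real.sin (x * (Real.pi / q)) + Real.sin ((x + 1 + 1) * (Real.pi / q)) =
      lamq q * Real.sin ((x + 1) * (Real.pi / q)) := by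
    rw [lamq, show x * (Real.pi / q) = (x + 1) * (Real.pi / q) - Real.pi / q by ring,
      show (x + 1 + 1) * (Real.pi / q) = (x + 1) * (Real.pi / q) + Real.pi / q by ring,
      Real.sin_sub, Real.sin_add]
    ring
  have hne := (sin_mul_pi_div_pos h0 h).ne'
  rw [sinRatio, sinRatio, inv_div, eq_div_iff hne, sub_mul, div_mul_cancel₀ _ hne]
  linarith

theorem one_le_lamq_sub_sinRatio (h0 : 0 ≤ x) (h : 2 * x + 3 ≤ q) :
    1 ≤ lamq q - sinRatio q x := by
  rw [lamq_sub_sinRatio (by linarith) (by linarith), sinRatio, inv_div,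
    one_le_div (sin_mul_pi_div_pos (by linarith) (by linarith))]
  exact sin_mul_pi_div_le (by linarith) (by linarith)

theorem sinRatio_neg_half (hq : 1 ≤ q) : sinRatio q (-(1 / 2)) = -1 := by
  have hq' : (1 : ℝ) ≤ q := by exact_mod_cast hq
  have hsin := sin_mul_pi_div_pos (q := q) (x := 1 / 2) (by norm_num) (by linarith)
  rw [sinRatio, show (-(1 / 2) + 1 : ℝ) = 1 / 2 by norm_num, neg_mul, Real.sin_neg, neg_div,
    div_self hsin.ne']

theorem sinRatio_half (hq : 1 ≤ q) : sinRatio q (1 / 2) = (lamq q + 1)⁻¹ := by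
  have hq' : (1 : ℝ) ≤ q := by exact_mod_cast hq
  have hstep := lamq_sub_sinRatio (q := q) (x := -(1 / 2)) (by norm_num) (by linarith)
  rw [sinRatio_neg_half hq, sub_neg_eq_add, show (-(1 / 2) + 1 : ℝ) = 1 / 2 by norm_num] at hstep
  rw [hstep, inv_inv]

theorem sinRatio_one (hq : 2 ≤ q) : sinRatio q 1 = (lamq q)⁻¹ := by
  have hq' : (2 : ℝ) ≤ q := by exact_mod_cast hq
  have hzero : sinRatio q 0 = 0 := by simp [sinRatio]
  have hstep := lamq_sub_sinRatio (q := q) (x := 0) (by norm_num) (by linarith)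
  rw [hzero, sub_zero, zero_add] at hstep
  rw [hstep, inv_inv]

end Trigonometry

section CriticalBound

variable {q : ℕ} {a : ℕ → ℤ}

theorem two_mul_hQ_add_two_le (hq : 2 ≤ q) : 2 * hQ q + 2 ≤ q := by
  unfold hQ
  grind

theorem eq_two_mul_hQ_add_three (hq : 3 ≤ q) (h : hQ q < (criticalWord q).length) :
    q = 2 * hQ q + 3 := by
  unfold criticalWord hQ at *
  grind

theorem criticalWord_length_le (q : ℕ) : (criticalWord q).length ≤ 2 * hQ q + 1 := by
  unfold criticalWord
  grind

/-- The prefix bounds for `criticalWord q`: the first run of ones starts at the parameter `1/2`,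
where `sinRatio` is `1/(λ+1)`, and the run after the `2` starts at `1`, where it is `1/λ`. -/
noncomputable def criticalBound (q j : ℕ) : ℝ :=
  if j ≤ hQ q then sinRatio q (j + 1 / 2) else sinRatio q (j - hQ q)

theorem criticalBound_le_one (hq : 3 ≤ q) {j : ℕ} (hj : j ≤ (criticalWord q).length) :
    criticalBound q j ≤ 1 := by
  have hqh : (2 * hQ q + 2 : ℝ) ≤ q := by exact_mod_cast two_mul_hQ_add_two_le (by omega)
  have hlen := criticalWord_length_le q
  unfold criticalBound
  split_ifs with hjh
  · have hj' : (j : ℝ) ≤ hQ q := by exact_mod_cast hjh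
    exact sinRatio_le_one (by positivity) (by linarith)
  · push Not at hjh
    have hq' : (q : ℝ) = 2 * hQ q + 3 := by
      exact_mod_cast eq_two_mul_hQ_add_three hq (hjh.trans_le hj)
    have hlt : (hQ q : ℝ) < j := by exact_mod_cast hjh
    have hle : (j : ℝ) ≤ 2 * hQ q + 1 := by exact_mod_cast hj.trans hlen
    exact sinRatio_le_one (by linarith) (by linarith)

theorem criticalBound_step (hq : 3 ≤ q) {j : ℕ} (hj : j < (criticalWord q).length) :
    1 ≤ (criticalWord q)[j] * lamq q - criticalBound q j ∧
      ((criticalWord q)[j] * lamq q - criticalBound q j)⁻¹ ≤ criticalBound q (j + 1) := by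
  have hones : ∀ x : ℝ, 0 ≤ x → 2 * x + 3 ≤ q → 1 ≤ lamq q - sinRatio q x ∧
      (lamq q - sinRatio q x)⁻¹ ≤ sinRatio q (x + 1) := by
    intro x h0 h
    refine ⟨one_le_lamq_sub_sinRatio h0 h, le_of_eq ?_⟩
    rw [lamq_sub_sinRatio (by linarith) (by linarith), inv_inv]
  rw [criticalWord_getElem]
  rcases lt_trichotomy j (hQ q) with hlt | rfl | hgt
  · have hqh : (2 * hQ q + 2 : ℝ) ≤ q := by exact_mod_cast two_mul_hQ_add_two_le (by omega)
    have hj' : (j : ℝ) + 1 ≤ hQ q := by exact_mod_cast hlt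
    rw [criticalBound, criticalBound, if_neg hlt.ne, if_pos hlt.le,
      if_pos (Nat.succ_le_of_lt hlt), Int.cast_one, one_mul, Nat.cast_succ, add_right_comm]
    exact hones _ (by positivity) (by linarith)
  · have hlam := one_le_lamq hq
    have hle := criticalBound_le_one hq hj.le
    have hnext : criticalBound q (hQ q + 1) = (lamq q)⁻¹ := by
      rw [criticalBound, if_neg (by omega), Nat.cast_succ, add_sub_cancel_left,
        sinRatio_one (by omega)]
    rw [if_pos rfl, hnext, Int.cast_ofNat]
    refine ⟨by linarith, ?_⟩
    gcongr
    linarith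
  · have hq' : (q : ℝ) = 2 * hQ q + 3 := by
      exact_mod_cast eq_two_mul_hQ_add_three hq (hgt.trans hj)
    have hj' : (j : ℝ) ≤ 2 * hQ q := by
      exact_mod_cast Nat.le_of_lt_succ (hj.trans_le (criticalWord_length_le q))
    have hgt' : (hQ q : ℝ) < j := by exact_mod_cast hgt
    rw [criticalBound, criticalBound, if_neg hgt.ne', if_neg hgt.not_ge, if_neg (by omega),
      Int.cast_one, one_mul, Nat.cast_succ, add_sub_right_comm]
    exact hones _ (by linarith) (by linarith)

theorem isPrefixBound_criticalBound (hq : 3 ≤ q) :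
    IsPrefixBound (lamq q) (criticalWord q) (criticalBound q) where
  inv_add_one_le_zero := by
    rw [criticalBound, if_pos (Nat.zero_le _), Nat.cast_zero, zero_add, sinRatio_half (by omega)]
  inv_le_succ _ h := (criticalBound_step hq h).2
  one_le_sub _ h := (criticalBound_step hq h).1
  le_one _ h := criticalBound_le_one hq h

-- `criticalBound 3 1 = 1` is too weak for `|t_n| < 1`, hence the bounds `1/2` and `2/3` instead.
theorem isPrefixBound_three :
    IsPrefixBound (lamq 3) (criticalWord 3) fun j => (j + 1) / (j + 2) := by
  have hword : criticalWord 3 = [2] := by decide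
  rw [hword, lamq_three]
  constructor
  · norm_num
  · intro j h
    obtain rfl : j = 0 := by simpa using h
    norm_num
  · intro j h
    obtain rfl : j = 0 := by simpa using h
    norm_num
  · intro j _
    exact div_le_one_of_le₀ (by linarith) (by positivity)

theorem RegularSeq.abs_denRatio_le_one (hq : 3 ≤ q) (ha : RegularSeq q a) (hnz : ∀ n, a n ≠ 0)
    (n : ℕ) : |denRatio (lamq q) a n| ≤ 1 := by
  have hZ := isPrefixBound_criticalBound hq
  obtain ⟨j, hj, hle⟩ :=
    ha.admissible.exists_abs_denRatio_le ha.neg.admissible hZ (one_le_lamq hq) hnz n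
  exact hle.trans (hZ.le_one j hj)

theorem RegularSeq.abs_denRatio_le_two_thirds (ha : RegularSeq 3 a) (hnz : ∀ n, a n ≠ 0)
    (n : ℕ) : |denRatio (lamq 3) a n| ≤ 2 / 3 := by
  obtain ⟨j, hj, hle⟩ := ha.admissible.exists_abs_denRatio_le ha.neg.admissible
    isPrefixBound_three (one_le_lamq le_rfl) hnz n
  have hj' : (j : ℝ) ≤ 1 := by exact_mod_cast hj.trans (criticalWord_length_le 3)
  refine hle.trans ?_
  rw [div_le_div_iff₀ (by positivity) (by norm_num)]
  linarith

end CriticalBound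

section Contraction

theorem mul_sub_ne_zero_of_abs_lt {lam t : ℝ} {m : ℤ} (hm : m ≠ 0) (ht : |t| < lam) :
    m * lam - t ≠ 0 := by
  have hm1 : (1 : ℝ) ≤ |(m : ℝ)| := by exact_mod_cast Int.one_le_abs hm
  intro h
  have heq : |(m : ℝ)| * |lam| = |t| := by rw [← abs_mul, sub_eq_zero.mp h]
  nlinarith [le_abs_self lam, abs_nonneg t]

theorem abs_le_sub_one_or_le_abs_mul_sub {lam t : ℝ} {m : ℤ} (hlam : 1 ≤ lam) (hm : m ≠ 0)
    (ht : |t| ≤ 1) (hgap : 1 ≤ |m * lam - t|) : |t| ≤ lam - 1 ∨ lam ≤ |m * lam - t| := by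
  wlog hpos : 0 < m generalizing m t
  · have hneg : |((-m : ℤ) : ℝ) * lam - -t| = |m * lam - t| := by
      rw [← abs_neg]
      push_cast
      congr 1
      ring
    have := this (m := -m) (t := -t) (by omega) (by rwa [abs_neg]) (by rwa [hneg]) (by omega)
    rwa [abs_neg, hneg] at this
  have ht1 := (abs_le.mp ht).2
  rcases (Int.add_one_le_of_lt hpos).eq_or_lt with hone | htwo
  · obtain rfl : m = 1 := by omega
    rw [Int.cast_one, one_mul, abs_of_nonneg (by linarith : 0 ≤ lam - t)] at hgap ⊢
    rcases le_total 0 t with h | h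
    · exact Or.inl (by rw [abs_of_nonneg h]; linarith)
    · exact Or.inr (by linarith)
  · have hm2 : (2 : ℝ) ≤ m := by exact_mod_cast htwo
    exact Or.inr (le_abs.mpr (Or.inl (by nlinarith)))

theorem abs_denRatio_le_or_succ_le {lam : ℝ} {a : ℕ → ℤ} (hlam : 1 < lam) (hnz : ∀ n, a n ≠ 0)
    (hle : ∀ n, |denRatio lam a n| ≤ 1) (n : ℕ) :
    |denRatio lam a n| ≤ lam - 1 ∨ |denRatio lam a (n + 1)| ≤ lam⁻¹ := by
  have hsucc := hle (n + 1)
  rw [denRatio, abs_inv] at hsucc ⊢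
  have hne := mul_sub_ne_zero_of_abs_lt (hnz n) ((hle n).trans_lt hlam)
  have hgap := (inv_le_one₀ (abs_pos.mpr hne)).mp hsucc
  refine (abs_le_sub_one_or_le_abs_mul_sub hlam.le (hnz n) (hle n) hgap).imp_right fun h => ?_
  gcongr

theorem RegularSeq.exists_contraction {q : ℕ} {a : ℕ → ℤ} (hq : 3 ≤ q) (ha : RegularSeq q a)
    (hnz : ∀ n, a n ≠ 0) : ∃ c : ℝ, 0 < c ∧ c < 1 ∧
      ∀ n, |denRatio (lamq q) a n| ≤ c ∨ |denRatio (lamq q) a (n + 1)| ≤ c := by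
  rcases hq.eq_or_lt with rfl | hq4
  · exact ⟨2 / 3, by norm_num, by norm_num, fun n => Or.inl (ha.abs_denRatio_le_two_thirds hnz n)⟩
  · have hlam := one_lt_lamq hq4
    have hlam2 := lamq_lt_two (q := q) (by omega)
    refine ⟨max (lamq q - 1) (lamq q)⁻¹, lt_max_of_lt_left (by linarith),
      max_lt (by linarith) (inv_lt_one_of_one_lt₀ hlam), fun n => ?_⟩
    exact (abs_denRatio_le_or_succ_le hlam hnz (ha.abs_denRatio_le_one hq hnz) n).imp
      (le_max_of_le_left ·) (le_max_of_le_right ·)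

theorem RegularSeq.digit_mul_sub_denRatio_ne_zero {q : ℕ} {a : ℕ → ℤ} (hq : 3 ≤ q)
    (ha : RegularSeq q a) (hnz : ∀ n, a n ≠ 0) (n : ℕ) :
    a n * lamq q - denRatio (lamq q) a n ≠ 0 := by
  refine mul_sub_ne_zero_of_abs_lt (hnz n) ?_
  rcases hq.eq_or_lt with rfl | hq4
  · exact (ha.abs_denRatio_le_two_thirds hnz n).trans_lt (by norm_num [lamq_three])
  · exact (ha.abs_denRatio_le_one hq hnz n).trans_lt (one_lt_lamq hq4)

end Contraction

section Convergents

variable {lam : ℝ} {A : ℕ → ℤ}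

theorem cfQ_eq_denRatio_mul
    (hden : ∀ n, A (n + 1) * lam - denRatio lam (fun i => A (i + 1)) n ≠ 0) (n : ℕ) :
    cfQ lam A n = denRatio lam (fun i => A (i + 1)) (n + 1) * cfQ lam A (n + 1) := by
  induction n with
  | zero =>
    have h0 := hden 0
    simp only [denRatio, cfQ, zero_add, sub_zero] at h0 ⊢
    exact (inv_mul_cancel₀ h0).symm
  | succ n ih =>
    rw [denRatio, cfQ, ih, ← sub_mul]
    exact (inv_mul_cancel_left₀ (hden (n + 1)) _).symm

theorem cfQ_ne_zero (hrec : ∀ n, ∃ t : ℝ, cfQ lam A n = t * cfQ lam A (n + 1)) (n : ℕ) :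
    cfQ lam A n ≠ 0 := by
  induction n with
  | zero => exact one_ne_zero
  | succ n ih =>
    obtain ⟨t, ht⟩ := hrec n
    exact right_ne_zero_of_mul (ht ▸ ih)

theorem cfP_mul_cfQ_sub (lam : ℝ) (A : ℕ → ℤ) (n : ℕ) :
    cfP lam A n * cfQ lam A (n + 1) - cfP lam A (n + 1) * cfQ lam A n = 1 := by
  induction n with
  | zero =>
    simp only [cfP, cfQ]
    ring
  | succ n ih =>
    rw [cfP, cfQ]
    linarith

theorem dist_convergent_succ {n : ℕ} (h : cfQ lam A n ≠ 0) (h' : cfQ lam A (n + 1) ≠ 0) :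
    dist (cfP lam A n / cfQ lam A n) (cfP lam A (n + 1) / cfQ lam A (n + 1)) =
      (|cfQ lam A n| * |cfQ lam A (n + 1)|)⁻¹ := by
  rw [Real.dist_eq, div_sub_div _ _ h h', mul_comm (cfQ lam A n) (cfP lam A (n + 1)),
    cfP_mul_cfQ_sub, one_div, abs_inv, abs_mul]

theorem exists_le_mul_pow_of_le_mul_succ_or {u : ℕ → ℝ} {c : ℝ} (hu : ∀ n, 0 < u n)
    (hmono : Monotone u) (hc0 : 0 < c) (hc1 : c < 1)
    (h : ∀ n, u n ≤ c * u (n + 1) ∨ u (n + 1) ≤ c * u (n + 2)) :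
    ∃ C r : ℝ, 0 < C ∧ 0 < r ∧ r < 1 ∧ ∀ n, C ≤ u n * r ^ n := by
  have hr0 : 0 < √c := Real.sqrt_pos.mpr hc0
  have htwo : ∀ n, u n ≤ c * u (n + 2) := by
    intro n
    rcases h n with hn | hn
    · exact hn.trans (by gcongr; exact hmono (Nat.le_succ _))
    · exact (hmono (Nat.le_succ n)).trans hn
  refine ⟨min (u 0) (u 1 * √c), √c, lt_min (hu 0) (mul_pos (hu 1) hr0), hr0,
    (Real.sqrt_lt' one_pos).mpr (by rwa [one_pow]), fun n => ?_⟩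
  induction n using Nat.twoStepInduction with
  | zero => simp
  | one => simp
  | more n ih _ =>
    calc min (u 0) (u 1 * √c) ≤ u n * √c ^ n := ih
      _ ≤ c * u (n + 2) * √c ^ n := by gcongr; exact htwo n
      _ = u (n + 2) * √c ^ (n + 2) := by rw [pow_add, Real.sq_sqrt hc0.le]; ring

theorem tendsto_atTop_of_le_mul_pow {u : ℕ → ℝ} {C r : ℝ} (hC : 0 < C) (hr0 : 0 < r) (hr1 : r < 1)
    (h : ∀ n, C ≤ u n * r ^ n) : Tendsto u atTop atTop := by
  refine tendsto_atTop_mono (fun n => ?_)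
    ((tendsto_pow_atTop_atTop_of_one_lt ((one_lt_inv₀ hr0).mpr hr1)).const_mul_atTop hC)
  rw [inv_pow, ← div_eq_mul_inv]
  exact (div_le_iff₀ (by positivity)).mpr (h n)

theorem cauchySeq_convergents {C r : ℝ} (hC : 0 < C) (hr1 : r < 1)
    (hne : ∀ n, cfQ lam A n ≠ 0) (hmono : Monotone fun n => |cfQ lam A n|)
    (h : ∀ n, C ≤ |cfQ lam A n| * r ^ n) :
    CauchySeq fun n => cfP lam A n / cfQ lam A n := by
  refine cauchySeq_of_le_geometric r C⁻¹ hr1 fun n => ?_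
  have hpos : 0 < |cfQ lam A n| := abs_pos.mpr (hne n)
  have hone : 1 ≤ |cfQ lam A (n + 1)| := by
    simpa only [cfQ, abs_one] using hmono (Nat.zero_le (n + 1))
  calc dist (cfP lam A n / cfQ lam A n) (cfP lam A (n + 1) / cfQ lam A (n + 1))
      = (|cfQ lam A n| * |cfQ lam A (n + 1)|)⁻¹ := dist_convergent_succ (hne n) (hne (n + 1))
    _ ≤ |cfQ lam A n|⁻¹ := by gcongr; exact le_mul_of_one_le_right hpos.le hone
    _ ≤ C⁻¹ * r ^ n := by
      rw [inv_mul_eq_div, le_div_iff₀ hC, inv_mul_le_iff₀ hpos]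
      exact h n

end Convergents

/-- Properties of the convergents of an infinite regular `λ_q`-CF: `q_n ≠ 0`,
`|q_n| ≥ |q_{n-1}|` (strictly for `q = 3`), `|q_n| → ∞`, and `(p_n/q_n)` is Cauchy. -/
theorem stmt18 (q : ℕ) (hq : 3 ≤ q) (A : ℕ → ℤ)
    (hnz : ∀ i, A (i + 1) ≠ 0) (hreg : RegularSeq q (fun i => A (i + 1))) :
    (∀ n, cfQ (lamq q) A n ≠ 0) ∧
    (∀ n : ℕ, 1 ≤ n → |cfQ (lamq q) A (n - 1)| ≤ |cfQ (lamq q) A n|) ∧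
    (q = 3 → ∀ n : ℕ, 1 ≤ n → |cfQ (lamq q) A (n - 1)| < |cfQ (lamq q) A n|) ∧
    Filter.Tendsto (fun n => |cfQ (lamq q) A n|) Filter.atTop Filter.atTop ∧
    CauchySeq (fun n => cfP (lamq q) A n / cfQ (lamq q) A n) := by
  have hrec := cfQ_eq_denRatio_mul (hreg.digit_mul_sub_denRatio_ne_zero hq hnz)
  have hne := cfQ_ne_zero fun n => ⟨_, hrec n⟩
  have hpos : ∀ n, 0 < |cfQ (lamq q) A n| := fun n => abs_pos.mpr (hne n)
  have hbound : ∀ {c : ℝ} {n : ℕ}, |denRatio (lamq q) (fun i => A (i + 1)) (n + 1)| ≤ c →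
      |cfQ (lamq q) A n| ≤ c * |cfQ (lamq q) A (n + 1)| := by
    intro c n h
    rw [hrec n, abs_mul]
    gcongr
  have hmono : Monotone fun n => |cfQ (lamq q) A n| := monotone_nat_of_le_succ fun n =>
    (hbound (hreg.abs_denRatio_le_one hq hnz (n + 1))).trans_eq (one_mul _)
  obtain ⟨c, hc0, hc1, hc⟩ := hreg.exists_contraction hq hnz
  obtain ⟨C, r, hC, hr0, hr1, hgrow⟩ := exists_le_mul_pow_of_le_mul_succ_or hpos hmono hc0 hc1
    fun n => (hc (n + 1)).imp hbound hbound
  refine ⟨hne, fun n _ => hmono (Nat.sub_le n 1), ?_, tendsto_atTop_of_le_mul_pow hC hr0 hr1 hgrow,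
    cauchySeq_convergents hC hr1 hne hmono hgrow⟩
  rintro rfl n hn
  obtain ⟨m, rfl⟩ := Nat.exists_eq_add_of_le' hn
  exact (hbound (hreg.abs_denRatio_le_two_thirds hnz (m + 1))).trans_lt
    (mul_lt_of_lt_one_left (hpos _) (by norm_num))
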